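/- Let k ≥ 3 and n ≥ k. Assume (inductive hypothesis) that every finite system of forces on (k−2)-simplices in ℝ^n that is in equilibrium can be written as a finite sum of (k−1)-beams with symmetric coefficient matrices that are structural for their simplices. Let O denote the origin, let [O, a_0^i, …, a_{k−2}^i], i = 1, …, l, be (k−1)-simplices each having the origin as a vertex, and let F_1, …, F_l ∈ ℝ^n. If the finite system of forces F = Σ_{i=1}^{l} F_i μ_{[O, a_0^i, …, a_{k−2}^i]} is in equilibrium, then there exist finitely many k-simplices τ_1, …, τ_m in ℝ^n and symmetric real n×n matrices A_1, …, A_m, with each A_j structural for τ_j, such that F = Σ_{j=1}^{m} A_j ⊗ Beam(τ_j) as ℝ^n-valued vector measures. -/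

import Mathlib

open MeasureTheory Matrix
open scoped RealInnerProductSpace

noncomputable section

abbrev Euc (n : ℕ) : Type := EuclideanSpace ℝ (Fin n)

/-- The action of an `n × n` real matrix on a vector of `ℝⁿ`. -/
def matVec {n : ℕ} (A : Matrix (Fin n) (Fin n) ℝ) (v : Euc n) : Euc n :=
  Matrix.toEuclideanLin A v

/-- `wedge v w = v wᵀ − w vᵀ`. -/
def wedge {n : ℕ} (v w : Euc n) : Matrix (Fin n) (Fin n) ℝ :=
  Matrix.of fun p q => v p * w q - w p * v q

/-- `rankOne v = v vᵀ`. -/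
def rankOne {n : ℕ} (v : Euc n) : Matrix (Fin n) (Fin n) ℝ :=
  Matrix.of fun p q => v p * v q

/-- The (closed) simplex spanned by a family of points: the convex hull of its range. -/
def simplexSet {n : ℕ} {ι : Type*} (b : ι → Euc n) : Set (Euc n) :=
  convexHull ℝ (Set.range b)

/-- The barycenter of a finite family of points. -/
def bary {n : ℕ} {ι : Type*} [Fintype ι] (b : ι → Euc n) : Euc n :=
  (Fintype.card ι : ℝ)⁻¹ • ∑ i, b i

/-- The vertices of the face of the simplex `b` opposite to the vertex `i`. -/
def face {n K : ℕ} (b : Fin K → Euc n) (i : Fin K) : {j : Fin K // j ≠ i} → Euc n :=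
  fun j => b j.1

/-- The vector measure `Σᵢ Fᵢ μ_{sᵢ}` of a finite system of forces, as an
`ℝⁿ`-valued set function; here `d` is the Hausdorff dimension of the simplices. -/
def sys {n l : ℕ} {ι : Type*} (d : ℝ) (s : Fin l → ι → Euc n) (F : Fin l → Euc n) :
    Set (Euc n) → Euc n :=
  fun S => ∑ i, (μH[d] (S ∩ simplexSet (s i))).toReal • F i

/-- A finite system of forces is in equilibrium: zero net force and zero net torque. -/
def equil {n l : ℕ} {ι : Type*} [Fintype ι] (d : ℝ) (s : Fin l → ι → Euc n)
    (F : Fin l → Euc n) : Prop :=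
  (∑ i, (μH[d] (simplexSet (s i))).toReal • F i = 0) ∧
  (∑ i, (μH[d] (simplexSet (s i))).toReal • wedge (bary (s i)) (F i) = 0)

/-- `v` is the outward unit conormal of the face of `b` opposite vertex `i`. -/
def IsConormal {n K : ℕ} (b : Fin K → Euc n) (i : Fin K) (v : Euc n) : Prop :=
  v ∈ vectorSpan ℝ (Set.range b) ∧ ‖v‖ = 1 ∧
    (∀ w ∈ vectorSpan ℝ (Set.range (face b i)), ⟪v, w⟫ = 0) ∧
    ⟪v, b i - bary (face b i)⟫ < 0

open scoped Classical in
/-- The outward unit conormal of the face of `b` opposite vertex `i`. -/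
def conormal {n K : ℕ} (b : Fin K → Euc n) (i : Fin K) : Euc n :=
  if h : ∃ v, IsConormal b i v then h.choose else 0

/-- A matrix is structural for a simplex if its range is contained in the
direction space of the simplex. -/
def Structural {n : ℕ} {ι : Type*} (A : Matrix (Fin n) (Fin n) ℝ) (b : ι → Euc n) : Prop :=
  ∀ v, matVec A v ∈ vectorSpan ℝ (Set.range b)

/-- The beam `A ⊗ Beam(τ)` of a simplex `τ` with `K` vertices (so of dimension `K − 1`,
with faces of dimension `K − 2`), as an `ℝⁿ`-valued set function. -/
def beam {n K : ℕ} (A : Matrix (Fin n) (Fin n) ℝ) (b : Fin K → Euc n) :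
    Set (Euc n) → Euc n :=
  fun S => ∑ i, (μH[(K : ℝ) - 2] (S ∩ simplexSet (face b i))).toReal • matVec A (conormal b i)

/-- `G` is a finite sum of beams over simplices with `K` vertices, with symmetric
coefficient matrices that are structural for their simplices. -/
def IsBeamSum {n : ℕ} (K : ℕ) (G : Set (Euc n) → Euc n) : Prop :=
  ∃ (m : ℕ) (τ : Fin m → Fin K → Euc n) (A : Fin m → Matrix (Fin n) (Fin n) ℝ),
    (∀ j, AffineIndependent ℝ (τ j)) ∧ (∀ j, (A j).IsSymm) ∧
    (∀ j, Structural (A j) (τ j)) ∧ (G = fun S => ∑ j, beam (A j) (τ j) S)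

/-!
Modulo sums of beams, the class `c x g` of the uniform load of resultant `g` on a simplex `x`
depends on `x` and `g` only through the moment of the load about the origin and through `g`.
Indeed, on the simplex obtained from `x` by adding a vertex `y`, the beam with the rank-one
coefficient `(y - x j) (y - x j)ᵀ` acts only on the faces opposite `y` and `x j`. The forces it
exerts there are opposite, as height times area is the same for every face, so `c x (y - x j)`
does not change when the vertex `x j` is moved to `y`. Hence `c` is affine in each vertex with an
alternating slope, and a polarization argument, using the symmetry of `c` in the vertices, shows
that this slope is one and the same alternating map `D` for all vertices and all simplices. So
`c x g = C g + D (∑ i, x i) g`, which sums to zero over a system in equilibrium.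
-/

section Incidence
open Function AffineMap

theorem image_update_setOf_ne {ι V : Type*} [DecidableEq ι] (x : ι → V) (j : ι) (y : V) :
    update x j y '' {i | i ≠ j} = x '' {i | i ≠ j} :=
  Set.image_congr fun _ hi => update_of_ne hi y x

variable {𝕜 V ι : Type*} [Field 𝕜] [AddCommGroup V] [Module 𝕜 V] {A B : AffineSubspace 𝕜 V}

theorem lineMap_mem_of_mem_of_mem {p q : V} {s t : 𝕜} (hst : s ≠ t) (hs : lineMap p q s ∈ A)
    (ht : lineMap p q t ∈ A) (r : 𝕜) : lineMap p q r ∈ A := by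
  have hr : lineMap s t ((r - s) / (t - s)) = r := by
    rw [lineMap_apply_ring', div_mul_cancel₀ _ (sub_ne_zero.2 hst.symm), sub_add_cancel]
  rw [← hr, apply_lineMap]
  exact lineMap_mem _ hs ht

theorem finite_setOf_lineMap_mem {p q : V} (h : p ∉ A ∨ q ∉ A) :
    {t : 𝕜 | lineMap p q t ∈ A}.Finite := by
  refine Set.Subsingleton.finite fun s hs t ht => by_contra fun hst => ?_
  have mem := lineMap_mem_of_mem_of_mem hst hs ht
  exact h.elim (· (by simpa using mem 0)) (· (by simpa using mem 1))

theorem exists_lineMap_notMem [Infinite 𝕜] {p q : V} (hA : p ∉ A ∨ q ∉ A) (hB : p ∉ B ∨ q ∉ B)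
    {T : Set 𝕜} (hT : T.Finite) : ∃ t ∉ T, lineMap p q t ∉ A ∧ lineMap p q t ∉ B := by
  have hfin := hT.union ((finite_setOf_lineMap_mem hA).union (finite_setOf_lineMap_mem hB))
  obtain ⟨t, ht⟩ := hfin.exists_notMem
  simp only [Set.mem_union, Set.mem_ofPred_eq, not_or] at ht
  exact ⟨t, ht⟩

theorem exists_notMem_of_ne_top [Infinite 𝕜] (hA : A ≠ ⊤) (hB : B ≠ ⊤) : ∃ o, o ∉ A ∧ o ∉ B := by
  obtain ⟨p, hp⟩ := SetLike.exists_not_mem_of_ne_top A hA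
  obtain ⟨q, hq⟩ := SetLike.exists_not_mem_of_ne_top B hB
  obtain ⟨t, -, ht⟩ := exists_lineMap_notMem (.inl hp) (.inr hq) Set.finite_empty
  exact ⟨_, ht⟩

theorem span_image_sub_setOf_notMem [Infinite 𝕜] {o : V} (hA : o ∉ A) (hB : o ∉ B) :
    Submodule.span 𝕜 ((· - o) '' {y | y ∉ A ∧ y ∉ B}) = ⊤ := by
  refine eq_top_iff.2 fun v _ => ?_
  obtain ⟨t, ht, hy⟩ :=
    exists_lineMap_notMem (q := o + v) (.inl hA) (.inl hB) (Set.finite_singleton (0 : 𝕜))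
  rw [← Submodule.smul_mem_iff _ ht]
  exact Submodule.subset_span ⟨_, hy, by simp [lineMap_apply]⟩

theorem affineSpan_image_ne_top (hdim : ∀ x : ι → V, affineSpan 𝕜 (Set.range x) ≠ ⊤) (x : ι → V)
    (J : Set ι) : affineSpan 𝕜 (x '' J) ≠ ⊤ :=
  ne_top_of_le_ne_top (hdim x) (affineSpan_mono 𝕜 (Set.image_subset_range x J))

theorem vectorSpan_range_fin {d : ℕ} (x : Fin (d + 1) → V) :
    vectorSpan 𝕜 (Set.range x) = Submodule.span 𝕜 (Set.range fun i : Fin d => x i.succ - x 0) := by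
  rw [vectorSpan_eq_span_vsub_set_right 𝕜 (Set.mem_range_self 0), ← Set.range_comp,
    Fin.range_fin_succ]
  simp [Fin.tail_def]

theorem linearIndependent_succ_sub_zero {d : ℕ} {x : Fin (d + 1) → V}
    (hx : AffineIndependent 𝕜 x) : LinearIndependent 𝕜 fun i : Fin d => x i.succ - x 0 :=
  ((affineIndependent_iff_linearIndependent_vsub 𝕜 x 0).1 hx).comp
    (fun i : Fin d => (⟨i.succ, i.succ_ne_zero⟩ : {j : Fin (d + 1) // j ≠ 0}))
    fun i j h => by simpa using h

theorem affineSpan_range_ne_top {d : ℕ} (hd : d < Module.finrank 𝕜 V) (x : Fin (d + 1) → V) :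
    affineSpan 𝕜 (Set.range x) ≠ ⊤ := by
  intro eq_top
  have finrank_le := finrank_vectorSpan_range_le 𝕜 x (Fintype.card_fin (d + 1))
  rw [← direction_affineSpan, eq_top, AffineSubspace.direction_top, finrank_top] at finrank_le
  exact hd.not_ge finrank_le

theorem affineIndependent_cons {d : ℕ} {x : Fin d → V} {y : V} (hx : AffineIndependent 𝕜 x)
    (hy : y ∉ affineSpan 𝕜 (Set.range x)) :
    AffineIndependent 𝕜 (Fin.cons y x : Fin (d + 1) → V) := by
  refine AffineIndependent.affineIndependent_of_notMem_span (i := 0) ?_ ?_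
  · rw [← affineIndependent_equiv (finSuccAboveEquiv 0)]
    exact hx
  · have image_eq : (Fin.cons y x : Fin (d + 1) → V) '' {k | k ≠ 0} = Set.range x := by
      rw [← Set.compl_singleton_eq, ← Fin.range_succ, ← Set.range_comp]
      rfl
    rwa [image_eq]

variable [DecidableEq ι] {x : ι → V} {j : ι} {y : V}

theorem affineIndependent_update_iff (hx : AffineIndependent 𝕜 x) :
    AffineIndependent 𝕜 (update x j y) ↔ y ∉ affineSpan 𝕜 (x '' {i | i ≠ j}) := by
  refine ⟨fun h => ?_, hx.affineIndependent_update_of_notMem_affineSpan⟩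
  have := h.notMem_affineSpan_sdiff j Set.univ
  rwa [update_self, ← Set.compl_eq_univ_sdiff, Set.compl_singleton_eq,
    image_update_setOf_ne] at this

theorem exists_affineIndependent_update [Infinite 𝕜] {x' : ι → V}
    (hdim : ∀ x : ι → V, affineSpan 𝕜 (Set.range x) ≠ ⊤)
    (hx : AffineIndependent 𝕜 x) (hx' : AffineIndependent 𝕜 x') (j : ι) :
    ∃ z, AffineIndependent 𝕜 (update x j z) ∧ AffineIndependent 𝕜 (update x' j z) := by
  simp only [affineIndependent_update_iff, hx, hx']
  exact exists_notMem_of_ne_top (affineSpan_image_ne_top hdim x _)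
    (affineSpan_image_ne_top hdim x' _)

theorem span_image_sub_setOf_affineIndependent [Infinite 𝕜] {x' : ι → V} {z : V}
    (hz : AffineIndependent 𝕜 (update x j z)) (hz' : AffineIndependent 𝕜 (update x' j z)) :
    Submodule.span 𝕜 ((· - z) '' {y | AffineIndependent 𝕜 (update x j y) ∧
      AffineIndependent 𝕜 (update x' j y)}) = ⊤ := by
  have independent_iff (y : V) :
      (AffineIndependent 𝕜 (update x j y) ∧ AffineIndependent 𝕜 (update x' j y)) ↔
      y ∉ affineSpan 𝕜 (x '' {i | i ≠ j}) ∧ y ∉ affineSpan 𝕜 (x' '' {i | i ≠ j}) := by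
    rw [← image_update_setOf_ne x j z, ← image_update_setOf_ne x' j z,
      ← affineIndependent_update_iff hz, ← affineIndependent_update_iff hz', update_idem,
      update_idem]
  simp only [independent_iff]
  obtain ⟨notMem, notMem'⟩ := (independent_iff z).1 ⟨hz, hz'⟩
  exact span_image_sub_setOf_notMem notMem notMem'

end Incidence

section Slope

variable {𝕜 V Q : Type*} [Field 𝕜] [AddCommGroup V] [Module 𝕜 V] [AddCommGroup Q]
  [Module 𝕜 Q]

theorem isAlt_of_forall_eq_neg [CharZero 𝕜] {B : V →ₗ[𝕜] V →ₗ[𝕜] Q}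
    (h : ∀ v w, B v w = -B w v) : B.IsAlt :=
  have := IsAddTorsionFree.of_isTorsionFree 𝕜 Q
  fun v => self_eq_neg.1 (h v v)

theorem exists_isAlt_forall_sub_eq [CharZero 𝕜] {P : Set V} {o : V} (ho : o ∈ P)
    (hspan : Submodule.span 𝕜 ((· - o) '' P) = ⊤) {φ : V → V →ₗ[𝕜] Q}
    (hφ : ∀ y ∈ P, ∀ z ∈ P, φ y (y - z) = φ z (y - z)) :
    ∃ θ : V →ₗ[𝕜] V →ₗ[𝕜] Q, θ.IsAlt ∧ ∀ y ∈ P, ∀ z ∈ P, φ y - φ z = θ (y - z) := by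
  have antisymm (y) (hy : y ∈ P) (z) (hz : z ∈ P) :
      (φ y - φ o) (z - o) = -(φ z - φ o) (y - o) := by
    have hyz := hφ y hy z hz
    rw [← sub_sub_sub_cancel_right y z o, map_sub (φ y) (y - o), map_sub (φ z) (y - o),
      hφ y hy o ho, hφ z hz o ho] at hyz
    simp only [LinearMap.sub_apply]
    linear_combination (norm := module) (-1 : 𝕜) • hyz
  let b := Module.Basis.ofSpan hspan.ge
  let θ : V →ₗ[𝕜] V →ₗ[𝕜] Q := b.constr 𝕜 fun i => φ (o + b i) - φ o
  have right (z) (hz : z ∈ P) : θ.flip (z - o) = -(φ z - φ o) := by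
    refine b.ext fun i => ?_
    obtain ⟨y, hy, hyb⟩ : b i ∈ (· - o) '' P := Module.Basis.ofSpan_subset hspan.ge ⟨i, rfl⟩
    rw [LinearMap.flip_apply, b.constr_basis, ← hyb, add_sub_cancel, antisymm y hy z hz,
      LinearMap.neg_apply]
  have left (y) (hy : y ∈ P) : θ (y - o) = φ y - φ o := by
    refine LinearMap.ext_on hspan ?_
    rintro _ ⟨z, hz, rfl⟩
    rw [← θ.flip_apply, right z hz, antisymm y hy z hz, LinearMap.neg_apply]
  have flip_eq : θ = -θ.flip := by
    refine LinearMap.ext_on hspan ?_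
    rintro _ ⟨y, hy, rfl⟩
    rw [LinearMap.neg_apply, right y hy, left y hy, neg_neg]
  refine ⟨θ, isAlt_of_forall_eq_neg fun v w => ?_, fun y hy z hz => ?_⟩
  · exact LinearMap.congr_fun₂ flip_eq v w
  · rw [← sub_sub_sub_cancel_right y z o, map_sub, left y hy, left z hz, sub_sub_sub_cancel_right]

/-- A function `φ` that is symmetric on a symmetric relation `R` and, for each fixed first argument
`a`, affine in the second one with alternating linear part `D a`. -/
structure IsSymmetricWithSlope (R : V → V → Prop) (φ : V → V → V →ₗ[𝕜] Q)
    (D : V → V →ₗ[𝕜] V →ₗ[𝕜] Q) : Prop where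
  rel_symm {a b : V} : R a b → R b a
  map_symm (a b : V) : φ a b = φ b a
  isAlt {a b : V} : R a b → (D a).IsAlt
  sub_eq {a y z : V} : R a y → R a z → φ a y - φ a z = D a (y - z)

namespace IsSymmetricWithSlope

variable {R : V → V → Prop} {φ : V → V → V →ₗ[𝕜] Q} {D : V → V →ₗ[𝕜] V →ₗ[𝕜] Q} {a a' b b' : V}

theorem slope_sub_apply_sub (h : IsSymmetricWithSlope R φ D) (hab : R a b) (hab' : R a b')
    (ha'b : R a' b) (ha'b' : R a' b') : (D a - D a') (b - b') = (D b - D b') (a - a') := by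
  rw [LinearMap.sub_apply, LinearMap.sub_apply, ← h.sub_eq hab hab', ← h.sub_eq ha'b ha'b',
    ← h.sub_eq (h.rel_symm hab) (h.rel_symm ha'b), ← h.sub_eq (h.rel_symm hab') (h.rel_symm ha'b'),
    h.map_symm b, h.map_symm b, h.map_symm b', h.map_symm b']
  abel

theorem slope_apply_sub_eq (h : IsSymmetricWithSlope R φ D) (hab : R a b) (ha'b : R a' b)
    (hspan : Submodule.span 𝕜 ((· - b) '' {y | R a y ∧ R a' y}) = ⊤) :
    D a (a - a') = D a' (a - a') := by
  refine LinearMap.ext_on hspan ?_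
  rintro _ ⟨z, ⟨haz, ha'z⟩, rfl⟩
  have four_point := LinearMap.congr_fun (h.slope_sub_apply_sub haz hab ha'z ha'b) (a - a')
  rw [LinearMap.sub_apply (D z), LinearMap.sub_apply, LinearMap.sub_apply, LinearMap.sub_apply,
    h.isAlt (h.rel_symm haz), h.isAlt (h.rel_symm hab), sub_self, sub_eq_zero] at four_point
  rw [← (h.isAlt haz).neg, ← (h.isAlt ha'z).neg, four_point]

theorem slope_eq [CharZero 𝕜] (h : IsSymmetricWithSlope R φ D)
    (hspan : ∀ a a', (∃ b, R a b) → (∃ b, R a' b) →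
      ∃ b, R a b ∧ R a' b ∧ Submodule.span 𝕜 ((· - b) '' {y | R a y ∧ R a' y}) = ⊤)
    (ha : ∃ b, R a b) (ha' : ∃ b, R a' b) : D a = D a' := by
  obtain ⟨o, hao, ha'o, hspan_o⟩ := hspan a a' ha ha'
  let P : Set V := {y | ∃ b, R y b}
  have mem_P {y z} (hyz : R y z) : z ∈ P := ⟨y, h.rel_symm hyz⟩
  have hspan_P : Submodule.span 𝕜 ((· - o) '' P) = ⊤ :=
    top_unique <| hspan_o.ge.trans <| Submodule.span_mono <| Set.image_mono fun _ hy => mem_P hy.1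
  obtain ⟨θ, hθalt, hθ⟩ := exists_isAlt_forall_sub_eq (mem_P hao) hspan_P (φ := D)
    fun y hy z hz =>
      have ⟨_, hyb, hzb, hspan_b⟩ := hspan y z hy hz
      h.slope_apply_sub_eq hyb hzb hspan_b
  refine LinearMap.ext_on hspan_o ?_
  rintro _ ⟨z, ⟨haz, ha'z⟩, rfl⟩
  -- As `D a - D a' = θ (a - a')` with `θ` alternating, the four-point identity makes it equal to
  -- its own negative.
  have four_point := h.slope_sub_apply_sub haz hao ha'z ha'o
  rw [hθ a ha a' ha', hθ z (mem_P haz) o (mem_P hao), ← hθalt.neg (a - a')] at four_point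
  have := IsAddTorsionFree.of_isTorsionFree 𝕜 (V →ₗ[𝕜] Q)
  refine sub_eq_zero.1 ?_
  rw [← LinearMap.sub_apply, hθ a ha a' ha']
  exact self_eq_neg.1 four_point

end IsSymmetricWithSlope

end Slope

section Slide
open Function

variable {𝕜 V Q ι : Type*} [Field 𝕜] [AddCommGroup V] [Module 𝕜 V] [AddCommGroup Q] [Module 𝕜 Q]
  [DecidableEq ι] {c : (ι → V) → V →ₗ[𝕜] Q} {x : ι → V} {i j : ι}

/-- Moving a vertex `x j` off the span of the simplex `x`, to `y`, does not change the value of `c`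
at the displacement `y - x j`. In the application `c x g` is the class modulo beams of the uniform
load of resultant `g` on `x`. -/
def SlideInvariant (c : (ι → V) → V →ₗ[𝕜] Q) : Prop :=
  ∀ (x : ι → V) (j : ι) (y : V), AffineIndependent 𝕜 x → y ∉ affineSpan 𝕜 (Set.range x) →
    c x (y - x j) = c (update x j y) (y - x j)

theorem SlideInvariant.two_smul_apply_sub (hc : SlideInvariant c) {S : AffineSubspace 𝕜 V}
    {q d : V} (hx : AffineIndependent 𝕜 x) (hq : AffineIndependent 𝕜 (update x j q))
    (hxS : ∀ i, x i ∈ S) (hqS : q ∈ S) (hd : d ∉ S.direction) :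
    (2 : 𝕜) • c x (q - x j) =
      c (update x j (q + d)) (q - x j) + c (update x j (q - d)) (q - x j) := by
  have notMem {u : ι → V} (hu : ∀ i, u i ∈ S) {v : V} (hv : v ∉ S.direction) :
      v + q ∉ affineSpan 𝕜 (Set.range u) := fun h =>
    hv <| (S.vadd_mem_iff_mem_direction v hqS).1 <|
      affineSpan_le_of_subset_coe (Set.range_subset_iff.2 hu) h
  have hqxS : ∀ i, update x j q i ∈ S :=
    (forall_update_iff x fun _ v => v ∈ S).2 ⟨hqS, fun i _ => hxS i⟩
  have hd' : -d ∉ S.direction := by rwa [neg_mem_iff]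
  -- Sliding `q` to `q ± d` shows that `c` agrees on `d` at `q + d` and at `q - d`, so that the `±d`
  -- parts cancel when the two ways of sliding `x j` to `q ± d` are added.
  have forward := hc x j _ hx (notMem hxS hd)
  have backward := hc x j _ hx (notMem hxS hd')
  have forward' := hc _ j _ hq (notMem hqxS hd)
  have backward' := hc _ j _ hq (notMem hqxS hd')
  rw [update_self, update_idem, add_sub_cancel_right] at forward' backward'
  rw [add_sub_assoc, map_add, map_add] at forward backward
  rw [map_neg, map_neg, neg_inj] at backward'
  rw [map_neg, map_neg, ← backward', forward'] at backward
  rw [two_smul, add_comm q d, sub_eq_neg_add q d]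
  linear_combination (norm := module) forward + backward

theorem SlideInvariant.apply_sub_eq [CharZero 𝕜] (hc : SlideInvariant c)
    (hdim : affineSpan 𝕜 (Set.range x) ≠ ⊤) (hx : AffineIndependent 𝕜 x) {z : V}
    (hz : AffineIndependent 𝕜 (update x j z)) :
    c x (z - x j) = c (update x j z) (z - x j) := by
  by_cases hzS : z ∉ affineSpan 𝕜 (Set.range x)
  · exact hc x j z hx hzS
  set S := affineSpan 𝕜 (Set.range x)
  rw [not_not] at hzS
  have hxS (i : ι) : x i ∈ S := mem_affineSpan 𝕜 ⟨i, rfl⟩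
  have hzxS : ∀ i, update x j z i ∈ S :=
    (forall_update_iff x fun _ v => v ∈ S).2 ⟨hzS, fun i _ => hxS i⟩
  obtain ⟨w, hw⟩ := SetLike.exists_not_mem_of_ne_top S hdim
  have hd : w - x j ∉ S.direction := fun h =>
    hw (by simpa using S.vadd_mem_of_mem_direction h (hxS j))
  have hz' := (affineIndependent_update_iff hx).1 hz
  obtain ⟨t, ht, hq, -⟩ := exists_lineMap_notMem (p := x j) (.inr hz') (.inr hz')
    (Set.toFinite {(0 : 𝕜), 1})
  rw [← affineIndependent_update_iff hx] at hq
  set q := AffineMap.lineMap (x j) z t with hq_def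
  have hqS : q ∈ S := AffineMap.lineMap_mem t (hxS j) hzS
  simp only [Set.mem_insert_iff, Set.mem_singleton_iff, not_or] at ht
  have h_x := hc.two_smul_apply_sub hx hq hxS hqS hd
  have h_z := hc.two_smul_apply_sub hz (by rwa [update_idem]) hzxS hqS hd
  have q_sub_x : q - x j = t • (z - x j) := by rw [hq_def, AffineMap.lineMap_apply]; simp
  have q_sub_z : q - z = (t - 1) • (z - x j) := by
    rw [hq_def, AffineMap.lineMap_apply, vsub_eq_sub, vadd_eq_add]; module
  simp only [q_sub_x, q_sub_z, update_self, update_idem, map_smul, ← smul_add] at h_x h_z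
  rw [smul_comm, smul_right_inj ht.1] at h_x
  rw [smul_comm, smul_right_inj (sub_ne_zero.2 ht.2), ← h_x] at h_z
  exact (smul_right_inj two_ne_zero).1 h_z.symm

/-- `c` is affine in the vertex `j` of `x`, with linear part `D`. -/
def HasSlopeAt (c : (ι → V) → V →ₗ[𝕜] Q) (x : ι → V) (j : ι) (D : V →ₗ[𝕜] V →ₗ[𝕜] Q) : Prop :=
  ∀ y z, AffineIndependent 𝕜 (update x j y) → AffineIndependent 𝕜 (update x j z) →
    c (update x j y) - c (update x j z) = D (y - z)

theorem hasSlopeAt_update_iff {D : V →ₗ[𝕜] V →ₗ[𝕜] Q} {y : V} :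
    HasSlopeAt c (update x j y) j D ↔ HasSlopeAt c x j D := by
  simp only [HasSlopeAt, update_idem]

theorem HasSlopeAt.unique [Infinite 𝕜] {D D' : V →ₗ[𝕜] V →ₗ[𝕜] Q} (h : HasSlopeAt c x j D)
    (h' : HasSlopeAt c x j D') {z : V} (hz : AffineIndependent 𝕜 (update x j z)) : D = D' := by
  refine LinearMap.ext_on (span_image_sub_setOf_affineIndependent hz hz) ?_
  rintro _ ⟨y, ⟨hy, -⟩, rfl⟩
  rw [← h y z hy hz, ← h' y z hy hz]

theorem HasSlopeAt.comp_swap {D : V →ₗ[𝕜] V →ₗ[𝕜] Q}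
    (hperm : ∀ x i j, c (x ∘ Equiv.swap i j) = c x) (h : HasSlopeAt c x i D) (j : ι) :
    HasSlopeAt c (x ∘ Equiv.swap i j) j D := by
  intro y z hy hz
  have update_comp (y : V) :
      update (x ∘ Equiv.swap i j) j y = update x i y ∘ Equiv.swap i j := by
    simp [update_comp_equiv]
  rw [update_comp, affineIndependent_equiv] at hy hz
  rw [update_comp, update_comp, hperm, hperm, h y z hy hz]

theorem SlideInvariant.exists_hasSlopeAt [CharZero 𝕜] (hc : SlideInvariant c)
    (hdim : ∀ x : ι → V, affineSpan 𝕜 (Set.range x) ≠ ⊤) (hx : AffineIndependent 𝕜 x) (j : ι) :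
    ∃ D : V →ₗ[𝕜] V →ₗ[𝕜] Q, D.IsAlt ∧ HasSlopeAt c x j D := by
  have hxj : AffineIndependent 𝕜 (update x j (x j)) := by rwa [update_eq_self]
  have hspan := span_image_sub_setOf_affineIndependent hxj hxj
  simp only [and_self] at hspan
  obtain ⟨D, hDalt, hD⟩ := exists_isAlt_forall_sub_eq
    (P := {y | AffineIndependent 𝕜 (update x j y)}) hxj hspan
    (φ := fun y => c (update x j y)) fun y hy z hz => by
      have := hc.apply_sub_eq (hdim _) hz (j := j) (z := y) (by rwa [update_idem])
      simpa using this.symm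
  exact ⟨D, hDalt, fun y z hy hz => hD y hy z hz⟩

theorem SlideInvariant.hasSlopeAt_update [CharZero 𝕜] {D : V →ₗ[𝕜] V →ₗ[𝕜] Q}
    (hc : SlideInvariant c) (hperm : ∀ x i j, c (x ∘ Equiv.swap i j) = c x)
    (hdim : ∀ x : ι → V, affineSpan 𝕜 (Set.range x) ≠ ⊤) (hij : i ≠ j) {a a' b b' : V}
    (hab : AffineIndependent 𝕜 (update (update x i a) j b))
    (hab' : AffineIndependent 𝕜 (update (update x i a') j b'))
    (hD : HasSlopeAt c (update x i a) j D) : HasSlopeAt c (update x i a') j D := by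
  have slope_exists (a : V) (ha : ∃ b, AffineIndependent 𝕜 (update (update x i a) j b)) :
      ∃ D : V →ₗ[𝕜] V →ₗ[𝕜] Q, D.IsAlt ∧ HasSlopeAt c (update x i a) j D := by
    obtain ⟨b, hb⟩ := ha
    simpa only [hasSlopeAt_update_iff] using hc.exists_hasSlopeAt hdim hb j
  choose! slope slope_isAlt hasSlopeAt_slope using slope_exists
  have update_update_comp_swap (a b : V) :
      update (update x i a) j b = update (update x i b) j a ∘ Equiv.swap i j := by
    rw [Equiv.comp_swap_eq_update]
    grind
  have hslope : IsSymmetricWithSlope (fun a b => AffineIndependent 𝕜 (update (update x i a) j b))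
      (fun a b => c (update (update x i a) j b)) slope :=
    { rel_symm := fun {a b} h => by rwa [update_update_comp_swap, affineIndependent_equiv] at h
      map_symm := fun a b => by rw [update_update_comp_swap, hperm]
      isAlt := fun h => slope_isAlt _ ⟨_, h⟩
      sub_eq := fun hy hz => hasSlopeAt_slope _ ⟨_, hy⟩ _ _ hy hz }
  have slope_eq : slope a = slope a' := by
    refine hslope.slope_eq (fun a a' ⟨b, hb⟩ ⟨b', hb'⟩ => ?_) ⟨_, hab⟩ ⟨_, hab'⟩
    obtain ⟨z, hz, hz'⟩ := exists_affineIndependent_update hdim hb hb' j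
    rw [update_idem] at hz hz'
    exact ⟨z, hz, hz', span_image_sub_setOf_affineIndependent hz hz'⟩
  rw [hD.unique (hasSlopeAt_slope a ⟨b, hab⟩) hab, slope_eq]
  exact hasSlopeAt_slope a' ⟨b', hab'⟩

theorem SlideInvariant.hasSlopeAt_of_hasSlopeAt [CharZero 𝕜] {D : V →ₗ[𝕜] V →ₗ[𝕜] Q}
    (hc : SlideInvariant c) (hperm : ∀ x i j, c (x ∘ Equiv.swap i j) = c x)
    (hdim : ∀ x : ι → V, affineSpan 𝕜 (Set.range x) ≠ ⊤) (hx : AffineIndependent 𝕜 x)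
    (hD : HasSlopeAt c x i D) (j : ι) : HasSlopeAt c x j D := by
  obtain rfl | hij := eq_or_ne i j
  · exact hD
  have swap_eq : x ∘ Equiv.swap i j = update (update x i (x j)) j (x i) := by
    rw [Equiv.swap_comm, Equiv.comp_swap_eq_update]
  have hswap : AffineIndependent 𝕜 (x ∘ Equiv.swap i j) := (affineIndependent_equiv _).2 hx
  have hDswap := hD.comp_swap hperm j
  rw [swap_eq] at hswap hDswap
  have hD' := hc.hasSlopeAt_update hperm hdim hij (a' := x i) (b' := x j) hswap (by simpa using hx)
    (hasSlopeAt_update_iff.1 hDswap)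
  rwa [update_eq_self] at hD'

theorem reflTransGen_update_of_eq_off_finset [Infinite 𝕜]
    (hdim : ∀ x : ι → V, affineSpan 𝕜 (Set.range x) ≠ ⊤) (J : Finset ι) {x x' : ι → V}
    (hx : AffineIndependent 𝕜 x) (hx' : AffineIndependent 𝕜 x') (h : ∀ i ∉ J, x i = x' i) :
    Relation.ReflTransGen (fun u v : ι → V => AffineIndependent 𝕜 u ∧ AffineIndependent 𝕜 v ∧
      ∃ j z, v = update u j z) x x' := by
  induction J using Finset.induction_on generalizing x x' with
  | empty => rw [funext fun i => h i (Finset.notMem_empty i)]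
  | insert i J _ ih =>
    obtain ⟨z, hz, hz'⟩ := exists_affineIndependent_update hdim hx hx' i
    have eq_off (k : ι) (hk : k ∉ J) : update x i z k = update x' i z k := by
      obtain rfl | hki := eq_or_ne k i
      · simp
      · simpa [hki] using h k (by simp [hki, hk])
    exact ((ih hz hz' eq_off).head ⟨hx, hz, i, z, rfl⟩).tail ⟨hz', hx', i, x' i, by simp⟩

variable [Fintype ι]

theorem SlideInvariant.sub_eq_apply_sum_sub_sum [CharZero 𝕜] {D : V →ₗ[𝕜] V →ₗ[𝕜] Q}
    (hc : SlideInvariant c) (hperm : ∀ x i j, c (x ∘ Equiv.swap i j) = c x)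
    (hdim : ∀ x : ι → V, affineSpan 𝕜 (Set.range x) ≠ ⊤) {x x' : ι → V}
    (hx : AffineIndependent 𝕜 x) (hx' : AffineIndependent 𝕜 x') (hD : ∀ i, HasSlopeAt c x i D) :
    c x' - c x = D (∑ i, x' i - ∑ i, x i) := by
  suffices (∀ i, HasSlopeAt c x' i D) ∧ c x' - c x = D (∑ i, x' i - ∑ i, x i) from this.2
  induction reflTransGen_update_of_eq_off_finset hdim Finset.univ hx hx' (by simp) with
  | refl => exact ⟨hD, by simp⟩
  | @tail u _ _ hstep ih =>
    obtain ⟨hu, hv, j, z, rfl⟩ := hstep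
    obtain ⟨hDu, hsub⟩ := ih hu
    refine ⟨hc.hasSlopeAt_of_hasSlopeAt hperm hdim hv (hasSlopeAt_update_iff.2 (hDu j)), ?_⟩
    have step := hDu j z (u j) hv (by rwa [update_eq_self])
    have sum_update : ∑ i, update u j z i = ∑ i, u i + (z - u j) := by
      rw [← sub_eq_iff_eq_add', ← Finset.sum_sub_distrib, Finset.sum_eq_single j] <;>
        simp +contextual
    rw [update_eq_self] at step
    rw [← sub_add_sub_cancel _ (c u), step, hsub, ← map_add, sum_update]
    congr 1
    abel

theorem SlideInvariant.sum_apply_eq_zero [CharZero 𝕜] [Nonempty ι] {κ : Type*} {T : Finset κ}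
    (hc : SlideInvariant c) (hperm : ∀ x i j, c (x ∘ Equiv.swap i j) = c x)
    (hdim : ∀ x : ι → V, affineSpan 𝕜 (Set.range x) ≠ ⊤) {s : κ → ι → V}
    (hs : ∀ k ∈ T, AffineIndependent 𝕜 (s k)) {g : κ → V} (hg : ∑ k ∈ T, g k = 0)
    (htorque : ∀ D : V →ₗ[𝕜] V →ₗ[𝕜] Q, D.IsAlt → ∑ k ∈ T, D (∑ i, s k i) (g k) = 0) :
    ∑ k ∈ T, c (s k) (g k) = 0 := by
  obtain rfl | ⟨o, ho⟩ := T.eq_empty_or_nonempty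
  · simp
  obtain ⟨D, hDalt, hD⟩ := hc.exists_hasSlopeAt hdim (hs o ho) (Classical.arbitrary ι)
  have affine (k) (hk : k ∈ T) :
      c (s k) (g k) = c (s o) (g k) + (D (∑ i, s k i) (g k) - D (∑ i, s o i) (g k)) := by
    rw [← LinearMap.sub_apply, ← map_sub, ← hc.sub_eq_apply_sum_sub_sum hperm hdim (hs o ho)
      (hs k hk) (hc.hasSlopeAt_of_hasSlopeAt hperm hdim (hs o ho) hD), LinearMap.sub_apply,
      add_sub_cancel]
  rw [Finset.sum_congr rfl affine, Finset.sum_add_distrib, Finset.sum_sub_distrib, htorque D hDalt,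
    ← map_sum, ← map_sum, hg, map_zero, map_zero, sub_zero, add_zero]

end Slide

section Volume

variable {E : Type*} [NormedAddCommGroup E] [InnerProductSpace ℝ E]

/-- The corner simplex of `ℝ^ι`, with vertices the origin and the standard basis vectors: every
simplex with an edge basis indexed by `ι` is an affine image of it. -/
def cornerSimplex (ι : Type*) [Fintype ι] [DecidableEq ι] : Set (EuclideanSpace ℝ ι) :=
  convexHull ℝ (insert 0 (Set.range fun i => EuclideanSpace.single i (1 : ℝ)))

open scoped Pointwise in
theorem hausdorffMeasure_convexHull_insert_range [MeasurableSpace E] [BorelSpace E]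
    {ι : Type*} [Fintype ι] [DecidableEq ι] (o : E) (v : ι → E) :
    μH[Fintype.card ι] (convexHull ℝ (insert o (Set.range fun i => o + v i))) =
      ENNReal.ofReal (√(gram ℝ v).det) * μH[Fintype.card ι] (cornerSimplex ι) := by
  set L : EuclideanSpace ℝ ι →ₗ[ℝ] E :=
    Fintype.linearCombination ℝ v ∘ₗ (WithLp.linearEquiv 2 ℝ (ι → ℝ)).toLinearMap
  have L_single (i : ι) : L (EuclideanSpace.single i 1) = v i := by
    simp [L, Fintype.linearCombination_apply_single]
  have image_eq : convexHull ℝ (insert o (Set.range fun i => o + v i)) =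
      (o + ·) '' (L '' cornerSimplex ι) := by
    rw [cornerSimplex, LinearMap.image_convexHull, Set.image_insert_eq, map_zero, ← Set.range_comp]
    simp only [Function.comp_def, L_single]
    change _ = o +ᵥ convexHull ℝ (insert (0 : E) (Set.range v))
    rw [← convexHull_vadd, ← Set.image_vadd, Set.image_insert_eq, ← Set.range_comp]
    simp [Function.comp_def]
  have normDet_eq : L.normDet = √(gram ℝ v).det := by
    have key := L.normDet_sq_eq_det_gram (EuclideanSpace.basisFun ι ℝ)
    simp only [EuclideanSpace.basisFun_apply, L_single, RCLike.ofReal_real_eq_id, id_eq] at key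
    rw [← key, Real.sqrt_sq L.normDet_nonneg]
  rw [image_eq, (isometry_add_left o).hausdorffMeasure_image (by simp), ← normDet_eq,
    ← finrank_euclideanSpace (𝕜 := ℝ), L.hausdorffMeasure_image]

theorem hausdorffMeasure_cornerSimplex_pos (ι : Type*) [Fintype ι] [DecidableEq ι] :
    0 < μH[Fintype.card ι] (cornerSimplex ι) := by
  rw [← finrank_euclideanSpace (𝕜 := ℝ)]
  refine Measure.measure_pos_of_nonempty_interior _
    (interior_convexHull_nonempty_iff_affineSpan_eq_top.2 ?_)
  rw [← AffineSubspace.coe_eq_univ_iff, affineSpan_insert_zero]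
  have span_single := (EuclideanSpace.basisFun ι ℝ).toBasis.span_eq
  simp only [OrthonormalBasis.coe_toBasis] at span_single
  rw [← funext (EuclideanSpace.basisFun_apply ι ℝ), span_single, Submodule.top_coe]

theorem hausdorffMeasure_cornerSimplex_lt_top (ι : Type*) [Fintype ι] [DecidableEq ι] :
    μH[Fintype.card ι] (cornerSimplex ι) < ⊤ := by
  rw [← finrank_euclideanSpace (𝕜 := ℝ)]
  exact (((Set.finite_range _).insert 0).isCompact_convexHull ℝ).measure_lt_top

/-- `u` is the altitude vector of the apex `p` over the base `S`: it leads from the foot of the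
perpendicular dropped from `p` on the affine span of `S` to `p` itself. -/
def IsAltitude (S : Set E) (p u : E) : Prop :=
  p - u ∈ affineSpan ℝ S ∧ u ∈ (vectorSpan ℝ S)ᗮ

theorem gram_sum_smul {ι κ : Type*} [Fintype ι] (v : ι → E) (P : Matrix ι κ ℝ) :
    gram ℝ (fun k => ∑ i, P i k • v i) = Pᵀ * gram ℝ v * P := by
  ext k l
  simp only [gram_apply, sum_inner, inner_sum, inner_smul_left, inner_smul_right, mul_apply,
    transpose_apply, Finset.sum_mul, Finset.mul_sum, RCLike.conj_to_real]
  exact Finset.sum_congr rfl fun _ _ => Finset.sum_congr rfl fun _ _ => by ring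

theorem det_gram_sumElim {ι : Type*} [Fintype ι] [DecidableEq ι] {v : ι → E} {u w : E}
    (hw : w - u ∈ Submodule.span ℝ (Set.range v)) (hu : u ∈ (Submodule.span ℝ (Set.range v))ᗮ) :
    (gram ℝ (Sum.elim v fun _ : Unit => w)).det = ‖u‖ ^ 2 * (gram ℝ v).det := by
  obtain ⟨z, hz⟩ := (Submodule.mem_span_range_iff_exists_fun ℝ).1 hw
  have orthogonal (i : ι) : ⟪v i, u⟫ = 0 :=
    (Submodule.mem_orthogonal _ _).1 hu _ (Submodule.subset_span ⟨i, rfl⟩)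
  set P : Matrix (ι ⊕ Unit) (ι ⊕ Unit) ℝ := fromBlocks 1 (of fun i _ => z i) 0 1 with hP
  have shear : gram ℝ (Sum.elim v fun _ : Unit => w) =
      Pᵀ * gram ℝ (Sum.elim v fun _ : Unit => u) * P := by
    rw [← gram_sum_smul]
    congr 1
    ext (i | _)
    · simp [hP, one_apply]
    · simp [hP, hz]
  have block : gram ℝ (Sum.elim v fun _ : Unit => u) =
      fromBlocks (gram ℝ v) 0 0 (of fun _ _ => ‖u‖ ^ 2) := by
    ext (i | _) (j | _) <;> simp [orthogonal, real_inner_comm _ u]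
  have det_P : P.det = 1 := by simp [hP]
  rw [shear, det_mul, det_mul, det_transpose, det_P, block, det_fromBlocks_zero₂₁]
  simp [mul_comm]

theorem hausdorffMeasure_convexHull_range [MeasurableSpace E] [BorelSpace E] {d : ℕ}
    (x : Fin (d + 1) → E) :
    μH[d] (convexHull ℝ (Set.range x)) =
      ENNReal.ofReal (√(gram ℝ fun i : Fin d => x i.succ - x 0).det) *
        μH[d] (cornerSimplex (Fin d)) := by
  have key := hausdorffMeasure_convexHull_insert_range (x 0) fun i : Fin d => x i.succ - x 0
  simpa [Fin.range_fin_succ x, Fin.tail_def] using key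

theorem hausdorffMeasure_convexHull_insert_eq_height_mul [MeasurableSpace E] [BorelSpace E]
    {d : ℕ} (x : Fin (d + 1) → E) {p u : E} (hu : IsAltitude (Set.range x) p u) :
    μH[d + 1] (convexHull ℝ (insert p (Set.range x))) * μH[d] (cornerSimplex (Fin d)) =
      ENNReal.ofReal ‖u‖ * μH[d] (convexHull ℝ (Set.range x)) *
        μH[d + 1] (cornerSimplex (Fin d ⊕ Unit)) := by
  set v : Fin d → E := fun i => x i.succ - x 0
  have insert_eq : insert p (Set.range x) =
      insert (x 0) (Set.range fun i => x 0 + Sum.elim v (fun _ : Unit => p - x 0) i) := by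
    have vertices : (fun i => x 0 + Sum.elim v (fun _ : Unit => p - x 0) i) =
        Sum.elim (Fin.tail x) fun _ => p := by
      ext (i | _) <;> simp [v, Fin.tail]
    rw [vertices, Set.Sum.elim_range, Set.range_const, Set.union_singleton, Fin.range_fin_succ x,
      Set.insert_comm]
  have mem_span : p - x 0 - u ∈ Submodule.span ℝ (Set.range v) := by
    rw [← vectorSpan_range_fin, ← direction_affineSpan, sub_right_comm]
    exact AffineSubspace.vsub_mem_direction hu.1 (mem_affineSpan ℝ ⟨0, rfl⟩)
  have mem_orthogonal : u ∈ (Submodule.span ℝ (Set.range v))ᗮ :=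
    vectorSpan_range_fin (𝕜 := ℝ) x ▸ hu.2
  have total := hausdorffMeasure_convexHull_insert_range (x 0) (Sum.elim v fun _ : Unit => p - x 0)
  rw [← insert_eq, det_gram_sumElim mem_span mem_orthogonal, Real.sqrt_mul (sq_nonneg _),
    Real.sqrt_sq (norm_nonneg _), ENNReal.ofReal_mul (norm_nonneg _), Fintype.card_sum,
    Fintype.card_fin, Fintype.card_unit, Nat.cast_add_one] at total
  rw [total, hausdorffMeasure_convexHull_range]
  ring

theorem hausdorffMeasure_convexHull_range_pos [MeasurableSpace E] [BorelSpace E] {d : ℕ}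
    {x : Fin (d + 1) → E} (hx : AffineIndependent ℝ x) :
    0 < μH[d] (convexHull ℝ (Set.range x)) := by
  have det_pos :=
    (posDef_gram_of_linearIndependent (𝕜 := ℝ) (linearIndependent_succ_sub_zero hx)).det_pos
  rw [hausdorffMeasure_convexHull_range]
  refine ENNReal.mul_pos ?_ ?_
  · simpa using det_pos
  · simpa using (hausdorffMeasure_cornerSimplex_pos (Fin d)).ne'

theorem hausdorffMeasure_convexHull_range_lt_top [MeasurableSpace E] [BorelSpace E] {d : ℕ}
    (x : Fin (d + 1) → E) : μH[d] (convexHull ℝ (Set.range x)) < ⊤ := by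
  rw [hausdorffMeasure_convexHull_range]
  refine ENNReal.mul_lt_top ENNReal.ofReal_lt_top ?_
  simpa using hausdorffMeasure_cornerSimplex_lt_top (Fin d)

theorem height_mul_hausdorffMeasure_eq [MeasurableSpace E] [BorelSpace E] {d : ℕ}
    {x y : Fin (d + 1) → E} {p q u w : E} (hx : IsAltitude (Set.range x) p u)
    (hy : IsAltitude (Set.range y) q w) (h : insert p (Set.range x) = insert q (Set.range y)) :
    ENNReal.ofReal ‖u‖ * μH[d] (convexHull ℝ (Set.range x)) =
      ENNReal.ofReal ‖w‖ * μH[d] (convexHull ℝ (Set.range y)) := by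
  have pos := (hausdorffMeasure_cornerSimplex_pos (Fin d ⊕ Unit)).ne'
  have lt_top := (hausdorffMeasure_cornerSimplex_lt_top (Fin d ⊕ Unit)).ne
  simp only [Fintype.card_sum, Fintype.card_fin, Fintype.card_unit, Nat.cast_add_one] at pos lt_top
  rw [← ENNReal.mul_left_inj pos lt_top, ← hausdorffMeasure_convexHull_insert_eq_height_mul x hx, h,
    hausdorffMeasure_convexHull_insert_eq_height_mul y hy]

theorem exists_isAltitude {S : Set E} [FiniteDimensional ℝ (vectorSpan ℝ S)] (hS : S.Nonempty)
    (p : E) : ∃ u, IsAltitude S p u := by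
  obtain ⟨o, ho⟩ := hS
  obtain ⟨v, hv, u, hu, hp⟩ := (vectorSpan ℝ S).exists_add_mem_mem_orthogonal (p - o)
  refine ⟨u, ?_, hu⟩
  have foot_eq : p - u = v +ᵥ o := by
    rw [vadd_eq_add, ← sub_eq_iff_eq_add, sub_right_comm, hp, add_sub_cancel_right]
  rw [foot_eq]
  rw [← direction_affineSpan] at hv
  exact AffineSubspace.vadd_mem_of_mem_direction hv (mem_affineSpan ℝ ho)

theorem IsAltitude.ne_zero {S : Set E} {p u : E} (hu : IsAltitude S p u)
    (hp : p ∉ affineSpan ℝ S) : u ≠ 0 := by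
  rintro rfl
  exact hp (by simpa using hu.1)

theorem IsAltitude.inner_sub_eq {S : Set E} {p q u v : E} (hu : IsAltitude S p u)
    (hq : q ∈ affineSpan ℝ S) (hv : v ∈ (vectorSpan ℝ S)ᗮ) : ⟪v, p - q⟫ = ⟪v, u⟫ := by
  have foot_sub : p - u - q ∈ vectorSpan ℝ S :=
    direction_affineSpan ℝ S ▸ AffineSubspace.vsub_mem_direction hu.1 hq
  rw [← sub_eq_zero, ← inner_sub_right, sub_right_comm]
  exact Submodule.inner_left_of_mem_orthogonal foot_sub hv

theorem IsAltitude.mem_span_singleton {S : Set E} {p u v : E} (hu : IsAltitude S p u)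
    (hv : v ∈ vectorSpan ℝ (insert p S)) (hv' : v ∈ (vectorSpan ℝ S)ᗮ) :
    v ∈ Submodule.span ℝ {u} := by
  rw [← direction_affineSpan, ← affineSpan_insert_affineSpan,
    AffineSubspace.direction_affineSpan_insert hu.1, direction_affineSpan, vsub_eq_sub,
    sub_sub_cancel] at hv
  obtain ⟨z, hz, w, hw, rfl⟩ := Submodule.mem_sup.1 hv
  have hw' : w ∈ (vectorSpan ℝ S)ᗮ := by
    obtain ⟨c, rfl⟩ := Submodule.mem_span_singleton.1 hz
    simpa using Submodule.sub_mem _ hv' (Submodule.smul_mem _ c hu.2)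
  have w_eq_zero : w = 0 := by
    simpa using Submodule.inner_left_of_mem_orthogonal hw hw'
  simpa [w_eq_zero] using hz

theorem eq_neg_inv_norm_smul {u v : E} (hv : v ∈ Submodule.span ℝ {u}) (norm_eq : ‖v‖ = 1)
    (inner_neg : ⟪v, u⟫ < 0) : v = -(‖u‖⁻¹ • u) := by
  obtain ⟨c, rfl⟩ := Submodule.mem_span_singleton.1 hv
  rw [real_inner_smul_left] at inner_neg
  have c_neg : c < 0 := by
    by_contra hc
    have := mul_nonneg (not_lt.1 hc) (real_inner_self_nonneg (x := u))
    linarith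
  rw [norm_smul, Real.norm_of_nonpos c_neg.le] at norm_eq
  rw [← neg_smul, ← eq_inv_of_mul_eq_one_left norm_eq, neg_neg]

end Volume

section Beam
open Function

variable {n : ℕ}

theorem bary_mem_affineSpan {ι : Type*} [Fintype ι] [Nonempty ι] (b : ι → Euc n) :
    bary b ∈ affineSpan ℝ (Set.range b) := by
  have bary_eq : bary b = Finset.univ.centroid ℝ b := by
    rw [Finset.centroid_def, Finset.affineCombination_eq_linear_combination _ _ _
      (Finset.sum_centroidWeights_eq_one_of_nonempty ℝ _ Finset.univ_nonempty)]
    simp [bary, Finset.smul_sum]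
  rw [bary_eq]
  exact centroid_mem_affineSpan_of_nonempty ℝ b Finset.univ_nonempty

theorem range_face {K : ℕ} (b : Fin (K + 1) → Euc n) (i : Fin (K + 1)) :
    Set.range (face b i) = Set.range (b ∘ i.succAbove) := by
  rw [Set.range_comp, Fin.range_succAbove]
  ext z
  simp [face]

theorem insert_range_face {K : ℕ} (b : Fin K → Euc n) (i : Fin K) :
    insert (b i) (Set.range (face b i)) = Set.range b := by
  ext z
  constructor
  · rintro (rfl | ⟨j, rfl⟩) <;> exact Set.mem_range_self _
  · rintro ⟨j, rfl⟩
    rcases eq_or_ne j i with rfl | hj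
    · exact Set.mem_insert _ _
    · exact Set.mem_insert_of_mem _ ⟨⟨j, hj⟩, rfl⟩

theorem notMem_affineSpan_range_face {K : ℕ} {b : Fin K → Euc n} (hb : AffineIndependent ℝ b)
    (i : Fin K) : b i ∉ affineSpan ℝ (Set.range (face b i)) := by
  have range_eq : Set.range (face b i) = b '' (Set.univ \ {i}) := by
    ext z
    simp [face]
  rw [range_eq]
  exact hb.notMem_affineSpan_sdiff i Set.univ

theorem isConormal_neg_inv_norm_smul {K : ℕ} {b : Fin K → Euc n} {i j : Fin K} (hji : j ≠ i)
    {u : Euc n} (hu : IsAltitude (Set.range (face b i)) (b i) u) (hu0 : u ≠ 0) :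
    IsConormal b i (-(‖u‖⁻¹ • u)) := by
  have : Nonempty {j // j ≠ i} := ⟨⟨j, hji⟩⟩
  have foot_mem : b i - u ∈ affineSpan ℝ (Set.range b) :=
    affineSpan_mono ℝ (insert_range_face b i ▸ Set.subset_insert _ _) hu.1
  have u_mem : u ∈ vectorSpan ℝ (Set.range b) := by
    simpa [direction_affineSpan] using
      AffineSubspace.vsub_mem_direction (mem_affineSpan ℝ (Set.mem_range_self i)) foot_mem
  have mem_orthogonal := Submodule.neg_mem _ (Submodule.smul_mem _ ‖u‖⁻¹ hu.2)
  refine ⟨Submodule.neg_mem _ (Submodule.smul_mem _ _ u_mem), ?_,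
    fun w hw => Submodule.inner_left_of_mem_orthogonal hw mem_orthogonal, ?_⟩
  · rw [norm_neg, norm_smul, norm_inv, norm_norm, inv_mul_cancel₀ (norm_ne_zero_iff.2 hu0)]
  · rw [hu.inner_sub_eq (bary_mem_affineSpan _) mem_orthogonal, inner_neg_left,
      real_inner_smul_left, Left.neg_neg_iff]
    exact mul_pos (inv_pos.2 (norm_pos_iff.2 hu0)) (real_inner_self_pos.2 hu0)

theorem conormal_eq {K : ℕ} {b : Fin K → Euc n} {i j : Fin K} (hji : j ≠ i) {u : Euc n}
    (hu : IsAltitude (Set.range (face b i)) (b i) u) (hu0 : u ≠ 0) :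
    conormal b i = -(‖u‖⁻¹ • u) := by
  have : Nonempty {j // j ≠ i} := ⟨⟨j, hji⟩⟩
  have exists_isConormal : ∃ v, IsConormal b i v := ⟨_, isConormal_neg_inv_norm_smul hji hu hu0⟩
  have isConormal : IsConormal b i (conormal b i) := by
    rw [conormal, dif_pos exists_isConormal]
    exact exists_isConormal.choose_spec
  obtain ⟨mem_vectorSpan, norm_eq, inner_eq_zero, inner_neg⟩ := isConormal
  have mem_orthogonal := (Submodule.mem_orthogonal' _ _).2 inner_eq_zero
  rw [hu.inner_sub_eq (bary_mem_affineSpan _) mem_orthogonal] at inner_neg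
  rw [← insert_range_face b i] at mem_vectorSpan
  exact eq_neg_inv_norm_smul (hu.mem_span_singleton mem_vectorSpan mem_orthogonal) norm_eq inner_neg

theorem inner_conormal_eq_zero {K : ℕ} (b : Fin K → Euc n) (i : Fin K) {v : Euc n}
    (hv : v ∈ vectorSpan ℝ (Set.range (face b i))) : ⟪v, conormal b i⟫ = 0 := by
  unfold conormal
  split_ifs with h
  · rw [real_inner_comm]
    exact h.choose_spec.2.2.1 v hv
  · exact inner_zero_right v

theorem inner_sub_conormal {K : ℕ} {b : Fin K → Euc n} {i j : Fin K} (hji : j ≠ i) {u : Euc n}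
    (hu : IsAltitude (Set.range (face b i)) (b i) u) (hu0 : u ≠ 0) :
    ⟪b i - b j, conormal b i⟫ = -‖u‖ := by
  have inner_eq := hu.inner_sub_eq (mem_affineSpan ℝ ⟨⟨j, hji⟩, rfl⟩) hu.2
  rw [face, real_inner_comm, real_inner_self_eq_norm_sq] at inner_eq
  rw [conormal_eq hji hu hu0, inner_neg_right, real_inner_smul_right, inner_eq, sq,
    inv_mul_cancel_left₀ (norm_ne_zero_iff.2 hu0)]

theorem matVec_rankOne (v w : Euc n) : matVec (rankOne v) w = ⟪v, w⟫ • v := by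
  ext p
  simp only [matVec, rankOne, toLpLin_apply, mulVec, dotProduct, of_apply, PiLp.smul_apply,
    smul_eq_mul, PiLp.inner_apply, Finset.sum_mul]
  refine Finset.sum_congr rfl fun q _ => ?_
  simp only [RCLike.inner_apply, conj_trivial]
  ring

theorem rankOne_isSymm (v : Euc n) : (rankOne v).IsSymm := by
  ext p q
  exact mul_comm _ _

theorem structural_rankOne {ι : Type*} {b : ι → Euc n} {v : Euc n}
    (hv : v ∈ vectorSpan ℝ (Set.range b)) : Structural (rankOne v) b := fun w => by
  rw [matVec_rankOne]
  exact Submodule.smul_mem _ _ hv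

theorem beam_smul {K : ℕ} (r : ℝ) (A : Matrix (Fin n) (Fin n) ℝ) (b : Fin K → Euc n) :
    beam (r • A) b = r • beam A b := by
  funext S
  simp only [beam, Pi.smul_apply, Finset.smul_sum, matVec, map_smul, LinearMap.smul_apply,
    smul_comm r]

/-- The finite sums of structural symmetric beams over simplices with `K` vertices, as a subspace
of the `ℝⁿ`-valued set functions. Forces are studied modulo this subspace. -/
def beamSums (n K : ℕ) : Submodule ℝ (Set (Euc n) → Euc n) where
  carrier := {G | IsBeamSum K G}
  zero_mem' := ⟨0, Fin.elim0, Fin.elim0, fun j => j.elim0, fun j => j.elim0, fun j => j.elim0,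
    funext fun _ => by simp⟩
  add_mem' := by
    rintro G G' ⟨m, τ, A, indep, symm, struct, rfl⟩ ⟨m', τ', A', indep', symm', struct', rfl⟩
    refine ⟨m + m', Fin.append τ τ', Fin.append A A', Fin.addCases ?_ ?_, Fin.addCases ?_ ?_,
      Fin.addCases ?_ ?_, funext fun S => by simp [Fin.sum_univ_add]⟩ <;>
      simpa only [Fin.append_left, Fin.append_right]
  smul_mem' := by
    rintro r G ⟨m, τ, A, indep, symm, struct, rfl⟩
    refine ⟨m, τ, fun j => r • A j, indep, fun j => (symm j).smul r, fun j v => ?_, ?_⟩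
    · simpa [matVec] using Submodule.smul_mem _ r (struct j v)
    · funext S
      simp only [beam_smul, Pi.smul_apply, Finset.smul_sum]

theorem beam_mem_beamSums {K : ℕ} {A : Matrix (Fin n) (Fin n) ℝ} {b : Fin K → Euc n}
    (hb : AffineIndependent ℝ b) (symm : A.IsSymm) (struct : Structural A b) :
    beam A b ∈ beamSums n K :=
  ⟨1, fun _ => b, fun _ => A, fun _ => hb, fun _ => symm, fun _ => struct, by simp⟩

/-- The force of resultant `g` spread uniformly, with respect to `d`-dimensional Hausdorff measure,
over `P`. Meaningful only if `0 < μH[d] P < ∞`: otherwise the load is `0`. -/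
def load (d : ℝ) (P : Set (Euc n)) : Euc n →ₗ[ℝ] (Set (Euc n) → Euc n) where
  toFun g S := ((μH[d] (S ∩ P)).toReal / (μH[d] P).toReal) • g
  map_add' g g' := by
    funext S
    exact smul_add _ g g'
  map_smul' r g := by
    funext S
    exact smul_comm _ r g

theorem load_apply (d : ℝ) (P : Set (Euc n)) (g : Euc n) (S : Set (Euc n)) :
    load d P g S = ((μH[d] (S ∩ P)).toReal / (μH[d] P).toReal) • g := rfl

theorem load_smul_apply {d : ℕ} {x : Fin (d + 1) → Euc n} (hx : AffineIndependent ℝ x) (v : Euc n)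
    (S : Set (Euc n)) :
    load d (simplexSet x) ((μH[d] (simplexSet x)).toReal • v) S =
      (μH[d] (S ∩ simplexSet x)).toReal • v := by
  have pos := ENNReal.toReal_pos (hausdorffMeasure_convexHull_range_pos hx).ne'
    (hausdorffMeasure_convexHull_range_lt_top x).ne
  rw [load_apply, smul_smul, simplexSet, div_mul_cancel₀ _ pos.ne']

theorem sys_eq_sum_load {d l : ℕ} {s : Fin l → Fin (d + 1) → Euc n}
    (hs : ∀ i, AffineIndependent ℝ (s i)) (F : Fin l → Euc n) :
    sys d s F =
      ∑ i, load d (simplexSet (s i)) ((μH[d] (simplexSet (s i))).toReal • F i) := by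
  funext S
  simp only [sys, Finset.sum_apply, load_smul_apply (hs _)]

theorem beam_rankOne_apply {d : ℕ} {b : Fin (d + 2) → Euc n} {p q : Fin (d + 2)} (hpq : p ≠ q)
    {u w : Euc n} (hu : IsAltitude (Set.range (face b p)) (b p) u) (hu0 : u ≠ 0)
    (hw : IsAltitude (Set.range (face b q)) (b q) w) (hw0 : w ≠ 0) (S : Set (Euc n)) :
    beam (rankOne (b p - b q)) b S =
      (‖w‖ * (μH[d] (S ∩ simplexSet (face b q))).toReal -
        ‖u‖ * (μH[d] (S ∩ simplexSet (face b p))).toReal) • (b p - b q) := by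
  have dim_eq : ((d + 2 : ℕ) : ℝ) - 2 = d := by
    push_cast
    ring
  have inner_other (i : Fin (d + 2)) (hi : i ≠ p ∧ i ≠ q) :
      ⟪b p - b q, conormal b i⟫ = 0 :=
    inner_conormal_eq_zero b i
      (vsub_mem_vectorSpan ℝ ⟨⟨p, hi.1.symm⟩, rfl⟩ ⟨⟨q, hi.2.symm⟩, rfl⟩)
  have inner_q : ⟪b p - b q, conormal b q⟫ = ‖w‖ := by
    rw [← neg_sub, inner_neg_left, inner_sub_conormal hpq hw hw0, neg_neg]
  rw [beam, dim_eq, Fintype.sum_eq_add p q hpq fun i hi => by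
    rw [matVec_rankOne, inner_other i hi, zero_smul, smul_zero]]
  rw [matVec_rankOne, matVec_rankOne, inner_sub_conormal hpq.symm hu hu0, inner_q]
  module

theorem hausdorffMeasure_simplexSet_face_toReal_ne_zero {d : ℕ} {b : Fin (d + 2) → Euc n}
    (hb : AffineIndependent ℝ b) (i : Fin (d + 2)) :
    (μH[d] (simplexSet (face b i))).toReal ≠ 0 := by
  rw [simplexSet, range_face]
  exact ENNReal.toReal_ne_zero.2
    ⟨(hausdorffMeasure_convexHull_range_pos (hb.comp_embedding i.succAboveEmb)).ne',
      (hausdorffMeasure_convexHull_range_lt_top _).ne⟩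

theorem height_mul_hausdorffMeasure_simplexSet_face {d : ℕ} {b : Fin (d + 2) → Euc n}
    {p q : Fin (d + 2)} {u w : Euc n} (hu : IsAltitude (Set.range (face b p)) (b p) u)
    (hw : IsAltitude (Set.range (face b q)) (b q) w) :
    ‖u‖ * (μH[d] (simplexSet (face b p))).toReal =
      ‖w‖ * (μH[d] (simplexSet (face b q))).toReal := by
  have insert_eq := (insert_range_face b p).trans (insert_range_face b q).symm
  rw [range_face] at hu hw
  rw [range_face, range_face] at insert_eq
  simpa [simplexSet, range_face] using
    congrArg ENNReal.toReal (height_mul_hausdorffMeasure_eq hu hw insert_eq)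

theorem load_sub_load_mem_beamSums {d : ℕ} {b : Fin (d + 2) → Euc n} (hb : AffineIndependent ℝ b)
    {p q : Fin (d + 2)} (hpq : p ≠ q) :
    load d (simplexSet (face b p)) (b p - b q) - load d (simplexSet (face b q)) (b p - b q) ∈
      beamSums n (d + 2) := by
  obtain ⟨u, hu⟩ := exists_isAltitude (S := Set.range (face b p)) ⟨_, ⟨q, hpq.symm⟩, rfl⟩ (b p)
  obtain ⟨w, hw⟩ := exists_isAltitude (S := Set.range (face b q)) ⟨_, ⟨p, hpq⟩, rfl⟩ (b q)
  have hu0 := hu.ne_zero (notMem_affineSpan_range_face hb p)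
  have hw0 := hw.ne_zero (notMem_affineSpan_range_face hb q)
  have hp := hausdorffMeasure_simplexSet_face_toReal_ne_zero hb p
  have hq := hausdorffMeasure_simplexSet_face_toReal_ne_zero hb q
  have smul_eq_neg_beam : (‖u‖ * (μH[d] (simplexSet (face b p))).toReal) •
      (load d (simplexSet (face b p)) (b p - b q) - load d (simplexSet (face b q)) (b p - b q)) =
      -beam (rankOne (b p - b q)) b := by
    funext S
    rw [Pi.neg_apply, beam_rankOne_apply hpq hu hu0 hw hw0 S, Pi.smul_apply, Pi.sub_apply,
      load_apply, load_apply, ← sub_smul, smul_smul, ← neg_smul, mul_sub]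
    congr 1
    nth_rw 2 [height_mul_hausdorffMeasure_simplexSet_face hu hw]
    field_simp
    ring
  rw [← Submodule.smul_mem_iff _ (mul_ne_zero (norm_ne_zero_iff.2 hu0) hp), smul_eq_neg_beam]
  exact Submodule.neg_mem _ (beam_mem_beamSums hb (rankOne_isSymm _)
    (structural_rankOne (vsub_mem_vectorSpan ℝ ⟨p, rfl⟩ ⟨q, rfl⟩)))

/-- The class, modulo beam sums, of the uniform load on the simplex with vertices `x`, as a linear
function of its resultant. -/
def loadClass (d : ℕ) {ι : Type*} (x : ι → Euc n) :
    Euc n →ₗ[ℝ] (Set (Euc n) → Euc n) ⧸ beamSums n (d + 2) :=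
  (beamSums n (d + 2)).mkQ ∘ₗ load d (simplexSet x)

theorem loadClass_comp_swap (d : ℕ) {ι : Type*} [DecidableEq ι] (x : ι → Euc n) (i j : ι) :
    loadClass d (x ∘ Equiv.swap i j) = loadClass d x := by
  rw [loadClass, loadClass, simplexSet, simplexSet, (Equiv.surjective _).range_comp]

theorem range_face_cons_zero {d : ℕ} (x : Fin (d + 1) → Euc n) (y : Euc n) :
    Set.range (face (Fin.cons y x : Fin (d + 2) → Euc n) 0) = Set.range x := by
  rw [range_face, Fin.succAbove_zero]
  rfl

theorem range_face_cons_succ {d : ℕ} (x : Fin (d + 1) → Euc n) (y : Euc n) (j : Fin (d + 1)) :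
    Set.range (face (Fin.cons y x : Fin (d + 2) → Euc n) j.succ) = Set.range (update x j y) := by
  have face_update : face (update x j y) j = face x j := by
    funext k
    rw [face, face, update_of_ne k.2]
  rw [← insert_range_face (update x j y) j, face_update, update_self, range_face, range_face,
    Fin.cons_comp_succ_succAbove, Fin.range_cons]
  rfl

theorem slideInvariant_loadClass (n d : ℕ) :
    SlideInvariant (loadClass d : (Fin (d + 1) → Euc n) → _) := by
  intro x j y hx hy
  have key := load_sub_load_mem_beamSums (affineIndependent_cons hx hy) (Fin.succ_ne_zero j).symm
  rw [simplexSet, simplexSet, range_face_cons_zero, range_face_cons_succ, Fin.cons_zero,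
    Fin.cons_succ] at key
  exact (Submodule.Quotient.eq _).2 key

end Beam

section Torque

variable {n : ℕ}

theorem two_smul_apply_eq_sum_wedge {Q : Type*} [AddCommGroup Q] [Module ℝ Q]
    {D : Euc n →ₗ[ℝ] Euc n →ₗ[ℝ] Q} (hD : D.IsAlt) (v w : Euc n) :
    (2 : ℝ) • D v w = ∑ p, ∑ q,
      wedge v w p q • D (EuclideanSpace.single p 1) (EuclideanSpace.single q 1) := by
  have expand (v w : Euc n) : D v w = ∑ p, ∑ q,
      (v p * w q) • D (EuclideanSpace.single p 1) (EuclideanSpace.single q 1) := by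
    have repr (v : Euc n) : v = ∑ p, v p • EuclideanSpace.single p (1 : ℝ) := by
      simpa using ((EuclideanSpace.basisFun (Fin n) ℝ).sum_repr v).symm
    conv_lhs => rw [repr v, repr w]
    simp only [map_sum, LinearMap.sum_apply, map_smul, LinearMap.smul_apply, Finset.smul_sum,
      smul_smul]
    rw [Finset.sum_comm]
    simp only [mul_comm]
  rw [two_smul]
  nth_rw 2 [← hD.neg]
  rw [← sub_eq_add_neg, expand v w, expand w v]
  simp only [← Finset.sum_sub_distrib, ← sub_smul, wedge, of_apply]

theorem sum_apply_eq_zero_of_sum_wedge_eq_zero {Q κ : Type*} [AddCommGroup Q] [Module ℝ Q]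
    {T : Finset κ} {v w : κ → Euc n} (h : ∑ k ∈ T, wedge (v k) (w k) = 0)
    {D : Euc n →ₗ[ℝ] Euc n →ₗ[ℝ] Q} (hD : D.IsAlt) : ∑ k ∈ T, D (v k) (w k) = 0 := by
  refine (smul_eq_zero_iff_right (two_ne_zero (α := ℝ))).1 ?_
  have entry (p q : Fin n) : ∑ k ∈ T, wedge (v k) (w k) p q = 0 := by
    rw [← Matrix.sum_apply, h, Matrix.zero_apply]
  simp_rw [Finset.smul_sum, two_smul_apply_eq_sum_wedge hD]
  rw [Finset.sum_comm]
  refine Finset.sum_eq_zero fun p _ => ?_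
  rw [Finset.sum_comm]
  refine Finset.sum_eq_zero fun q _ => ?_
  rw [← Finset.sum_smul, entry, zero_smul]

theorem wedge_sum_smul {ι : Type*} [Fintype ι] [Nonempty ι] (x : ι → Euc n) (r : ℝ) (w : Euc n) :
    wedge (∑ i, x i) (r • w) = (Fintype.card ι : ℝ) • r • wedge (bary x) w := by
  have sum_eq : ∑ i, x i = (Fintype.card ι : ℝ) • bary x := by
    rw [bary, smul_inv_smul₀ (Nat.cast_ne_zero.2 Fintype.card_ne_zero)]
  rw [sum_eq]
  ext p q
  simp only [wedge, of_apply, Matrix.smul_apply, PiLp.smul_apply, smul_eq_mul]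
  ring

end Torque

theorem statement4_general {d n l : ℕ} (hn : d + 1 ≤ n) {s : Fin l → Fin (d + 1) → Euc n}
    (hs : ∀ i, AffineIndependent ℝ (s i)) {F : Fin l → Euc n} (hequil : equil (d : ℝ) s F) :
    IsBeamSum (d + 2) (sys (d : ℝ) s F) := by
  obtain ⟨resultant_eq_zero, torque_eq_zero⟩ := hequil
  have moment_eq_zero :
      ∑ i, wedge (∑ j, s i j) ((μH[d] (simplexSet (s i))).toReal • F i) = 0 := by
    simp only [wedge_sum_smul, ← Finset.smul_sum, torque_eq_zero, smul_zero]
  have class_eq_zero :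
      ∑ i, loadClass d (s i) ((μH[d] (simplexSet (s i))).toReal • F i) = 0 :=
    (slideInvariant_loadClass n d).sum_apply_eq_zero (loadClass_comp_swap d)
      (affineSpan_range_ne_top (by simpa using hn)) (fun i _ => hs i) resultant_eq_zero
      fun _ hD => sum_apply_eq_zero_of_sum_wedge_eq_zero moment_eq_zero hD
  change sys (d : ℝ) s F ∈ beamSums n (d + 2)
  rw [sys_eq_sum_load hs, ← Submodule.Quotient.mk_eq_zero, ← Submodule.mkQ_apply, map_sum]
  exact class_eq_zero

/-- The radial inductive step: with `k = k' + 3 ≥ 3` and `n ≥ k`,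
assuming every equilibrium system on `(k−2)`-simplices (having `k − 1 = k' + 2`
vertices) decomposes into `(k−1)`-beams (over simplices with `k = k' + 3` vertices),
every equilibrium system on `(k−1)`-simplices having the origin as a vertex
decomposes into `k`-beams (over simplices with `k + 1 = k' + 4` vertices). -/
theorem statement4 {k' n l : ℕ} (hn : k' + 3 ≤ n)
    (IH : ∀ (l₂ : ℕ) (s₂ : Fin l₂ → Fin (k' + 2) → Euc n) (F₂ : Fin l₂ → Euc n),
        (∀ i, AffineIndependent ℝ (s₂ i)) → equil ((k' : ℝ) + 1) s₂ F₂ →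
        IsBeamSum (k' + 3) (sys ((k' : ℝ) + 1) s₂ F₂))
    (s : Fin l → Fin (k' + 3) → Euc n) (hs : ∀ i, AffineIndependent ℝ (s i))
    (h0 : ∀ i, s i 0 = 0)
    (F : Fin l → Euc n)
    (hequil : equil ((k' : ℝ) + 2) s F) :
    IsBeamSum (k' + 4) (sys ((k' : ℝ) + 2) s F) := by
  have cast_eq : (k' : ℝ) + 2 = (k' + 2 : ℕ) := by push_cast; rfl
  rw [cast_eq] at hequil ⊢
  exact statement4_general hn hs hequil

end
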